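/- Let C be an abelian category with Ext groups, let (A,B) be a left weak AB context cut on a class S, and set ω := A∩B. Then: (ω∩S)^∧ = B∩S; Ext^i(A',B')=0 for all A'∈A∩S, B'∈B∩S and all i≥1; and Thick(A∩S) = (A∩S)^∧. -/

import Mathlib

/-!
Write `X := A ∩ S`, `Y := B ∩ S` and `ω := X ∩ Y`, so that `(X, ω)` is a left Frobenius pair. The
argument is Auslander-Buchweitz approximation theory.

An object `M` with an `X`-resolution of length `n` sits in short exact sequences `0 → M → H → X₁ → 0`
and `0 → K → X₀ → M → 0` with `X₀, X₁ ∈ X` and `H, K ∈ ω^∧`; these are produced alternately by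
pushouts, using the cogenerator `ω` of `X` (`IsLeftFrobenius.approx`). If `M ∈ Y`, then `K ∈ Y` since
`Y` is closed under cones, hence `X₀ ∈ X ∩ Y = ω` and `M ∈ ω^∧`. This gives `ω^∧ = Y`
(`IsLeftFrobenius.mem_iff_resClass`), and dimension shifting gives `Ext^i(X, Y) = 0` for `i ≥ 1`.

For the thickness of `X^∧`, extensions of objects of `X` by objects of `ω^∧` split. Together with the
first approximation this shows that an extension of an object of `X` by an object of resolution
dimension at most `n` again has dimension at most `n` (`IsLeftFrobenius.resLength_ext`). Extensions,
cones and cocones in general reduce to this case by the approximations and by the closure of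
`Y = ω^∧` under extensions. Direct summands go by induction on the length of a resolution: if
`0 → K → W → M ⊕ N → 0` is exact with `W ∈ X`, then `T := ker (W → M)` is a retract of `T ×_N W`,
which is an extension of `W` by `K` (`IsLeftFrobenius.resLength_summand`).
-/

open CategoryTheory

universe w v u

variable {C : Type u} [Category.{v} C] [Abelian C]

/-- `IsSES A B X` : there is a short exact sequence `0 → A → B → X → 0` in `C`. -/
def IsSES (A B X : C) : Prop :=
  ∃ (f : A ⟶ B) (g : B ⟶ X) (zero : f ≫ g = 0),
    (ShortComplex.mk f g zero).ShortExact

/-- `P` is closed under extensions. -/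
def ClosedUnderExtensions (P : C → Prop) : Prop :=
  ∀ ⦃A B X : C⦄, IsSES A B X → P A → P X → P B

/-- `P` is closed under cones. -/
def ClosedUnderCones (P : C → Prop) : Prop :=
  ∀ ⦃A B X : C⦄, IsSES A B X → P A → P B → P X

/-- `P` is closed under cocones. -/
def ClosedUnderCocones (P : C → Prop) : Prop :=
  ∀ ⦃A B X : C⦄, IsSES A B X → P B → P X → P A

/-- `P` is closed under isomorphisms. -/
def ClosedUnderIsos (P : C → Prop) : Prop :=
  ∀ ⦃X Y : C⦄, (X ≅ Y) → P X → P Y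

/-- `P` is closed under direct summands. -/
def ClosedUnderSummands (P : C → Prop) : Prop :=
  ∀ ⦃X Y : C⦄, P X → (∃ (i : Y ⟶ X) (r : X ⟶ Y), i ≫ r = 𝟙 Y) → P Y

/-- `HasResLength P n M` : there is an exact sequence `0 → W_n → ⋯ → W_0 → M → 0`
with all `W_i` in `P`. -/
inductive HasResLength (P : C → Prop) : ℕ → C → Prop
  | of_iso {M W : C} (hW : P W) (e : M ≅ W) : HasResLength P 0 M
  | step {K W M : C} {n : ℕ} (hW : P W) (h : IsSES K W M)
      (hK : HasResLength P n K) : HasResLength P (n + 1) M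

/-- `P^∧` : the class of objects admitting a finite `P`-resolution. -/
def ResClass (P : C → Prop) : C → Prop := fun M => ∃ n, HasResLength P n M

/-- The resolution dimension `resdim_P(M) ∈ ℕ∞`. -/
noncomputable def resDim (P : C → Prop) (M : C) : ℕ∞ :=
  sInf {n : ℕ∞ | ∃ m : ℕ, n = (m : ℕ∞) ∧ HasResLength P m M}

/-- `HasCoresLength P n M` : there is an exact sequence `0 → M → W_0 → ⋯ → W_n → 0`
with all `W_i` in `P`. -/
inductive HasCoresLength (P : C → Prop) : ℕ → C → Prop
  | of_iso {M W : C} (hW : P W) (e : M ≅ W) : HasCoresLength P 0 M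
  | step {M W K : C} {n : ℕ} (hW : P W) (h : IsSES M W K)
      (hK : HasCoresLength P n K) : HasCoresLength P (n + 1) M

/-- `ω ∩ S` is a relative generator in `ω` : every `W ∈ ω` fits in a short exact
sequence `0 → W' → F → W → 0` with `F ∈ ω ∩ S` and `W' ∈ ω`. -/
def RelGenerator (ω S : C → Prop) : Prop :=
  ∀ ⦃W : C⦄, ω W → ∃ (W' F : C), ω W' ∧ (ω F ∧ S F) ∧ IsSES W' F W

/-- `P` is left thick : closed under extensions, direct summands and cocones. -/
def LeftThick (P : C → Prop) : Prop :=
  ClosedUnderExtensions P ∧ ClosedUnderSummands P ∧ ClosedUnderCocones P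

/-- `P` is right thick : closed under extensions, direct summands and cones. -/
def RightThick (P : C → Prop) : Prop :=
  ClosedUnderExtensions P ∧ ClosedUnderSummands P ∧ ClosedUnderCones P

/-- The smallest thick class (closed under extensions, direct summands, cones and
cocones) containing `P`. -/
inductive ThickClosure (P : C → Prop) : C → Prop
  | of {M : C} (h : P M) : ThickClosure P M
  | ext {A B X : C} (h : IsSES A B X) (hA : ThickClosure P A) (hX : ThickClosure P X) :
      ThickClosure P B
  | cone {A B X : C} (h : IsSES A B X) (hA : ThickClosure P A) (hB : ThickClosure P B) :
      ThickClosure P X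
  | cocone {A B X : C} (h : IsSES A B X) (hB : ThickClosure P B) (hX : ThickClosure P X) :
      ThickClosure P A
  | summand {X Y : C} (hX : ThickClosure P X) (i : Y ⟶ X) (r : X ⟶ Y) (hir : i ≫ r = 𝟙 Y) :
      ThickClosure P Y

section WithExt

variable [HasExt.{w} C]

/-- `Ext^i(A, B) = 0` for all `A ∈ P`, `B ∈ Q` and all `i ≥ 1`. -/
def ExtVanish (P Q : C → Prop) : Prop :=
  ∀ ⦃A B : C⦄, P A → Q B → ∀ i : ℕ, 1 ≤ i → Subsingleton (Abelian.Ext A B i)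

/-- `(X, ω)` is a left Frobenius pair in `C`. -/
def IsLeftFrobenius (X ω : C → Prop) : Prop :=
  LeftThick X ∧ (∀ ⦃W : C⦄, ω W → X W) ∧ ClosedUnderSummands ω ∧
    ExtVanish X ω ∧
    (∀ ⦃A : C⦄, X A → ∃ (W A' : C), ω W ∧ X A' ∧ IsSES A W A')

/-- `(X, ω)` is a left Frobenius pair cut on `S`. -/
def IsLeftFrobeniusCut (X ω S : C → Prop) : Prop :=
  LeftThick X ∧
  IsLeftFrobenius (fun M => X M ∧ S M) (fun M => ω M ∧ S M) ∧
  (ExtVanish (fun M => ω M ∧ S M) ω ∧ RelGenerator ω S) ∧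
  (ClosedUnderExtensions ω ∧ ClosedUnderSummands ω)

/-- `(A, B)` is a left weak AB context cut on `S`. -/
def IsLeftWeakABCut (A B S : C → Prop) : Prop :=
  IsLeftFrobeniusCut A (fun M => A M ∧ B M) S ∧
  RightThick (fun M => B M ∧ S M) ∧
  (∀ ⦃M : C⦄, B M → S M → ResClass (fun N => A N ∧ S N) M)

/-- `(U, V)` is a left 1-cotorsion pair cut on `T`. -/
def IsLeft1CotorsionCut (U V T : C → Prop) : Prop :=
  ClosedUnderSummands U ∧
  (∀ ⦃A B : C⦄, U A → T A → V B → Subsingleton (Abelian.Ext A B 1)) ∧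
  (∀ ⦃t : C⦄, T t → ∃ (K A : C), U A ∧ (∃ V' : C, V V' ∧ Nonempty (K ≅ V')) ∧ IsSES K A t)

/-- `(U, V)` is a right 1-cotorsion pair cut on `T`. -/
def IsRight1CotorsionCut (U V T : C → Prop) : Prop :=
  ClosedUnderSummands V ∧
  (∀ ⦃A B : C⦄, U A → V B → T B → Subsingleton (Abelian.Ext A B 1)) ∧
  (∀ ⦃t : C⦄, T t → ∃ (B W : C), V B ∧ (∃ U' : C, U U' ∧ Nonempty (W ≅ U')) ∧ IsSES t B W)

/-- `(U, V)` is a 1-cotorsion pair cut on `T`. -/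
def Is1CotorsionCut (U V T : C → Prop) : Prop :=
  IsLeft1CotorsionCut U V T ∧ IsRight1CotorsionCut U V T

/-- `(A, B)` is a left `n`-cotorsion pair cut on `S`. -/
def IsLeftNCotorsionCut (n : ℕ) (A B S : C → Prop) : Prop :=
  ClosedUnderSummands A ∧
  (∀ ⦃X Y : C⦄, A X → S X → B Y → ∀ i : ℕ, 1 ≤ i → i ≤ n → Subsingleton (Abelian.Ext X Y i)) ∧
  (∀ ⦃s : C⦄, S s → ∃ (K X : C), A X ∧ (∃ m : ℕ, m ≤ n - 1 ∧ HasResLength B m K) ∧ IsSES K X s)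

/-- `(A, B)` is a right `n`-cotorsion pair cut on `S`. -/
def IsRightNCotorsionCut (n : ℕ) (A B S : C → Prop) : Prop :=
  ClosedUnderSummands B ∧
  (∀ ⦃X Y : C⦄, A X → B Y → S Y → ∀ i : ℕ, 1 ≤ i → i ≤ n → Subsingleton (Abelian.Ext X Y i)) ∧
  (∀ ⦃s : C⦄, S s → ∃ (Y W : C), B Y ∧ (∃ m : ℕ, m ≤ n - 1 ∧ HasCoresLength A m W) ∧ IsSES s Y W)

/-- `(F, G)` is a complete cotorsion pair in `T`. -/
def IsCompleteCotorsionPairIn (T F G : C → Prop) : Prop :=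
  (∀ ⦃M : C⦄, F M → T M) ∧ (∀ ⦃M : C⦄, G M → T M) ∧
  ClosedUnderSummands F ∧ ClosedUnderSummands G ∧
  (∀ ⦃A B : C⦄, F A → G B → Subsingleton (Abelian.Ext A B 1)) ∧
  (∀ ⦃M : C⦄, T M →
    (∃ G₁ F₁ : C, G G₁ ∧ F F₁ ∧ IsSES G₁ F₁ M) ∧
    (∃ G₂ F₂ : C, G G₂ ∧ F F₂ ∧ IsSES M G₂ F₂))

end WithExt

/-! ### Short exact sequences in an abelian category -/

/-- Two specified composable morphisms form a short exact sequence. -/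
def SESMaps {A B X : C} (f : A ⟶ B) (g : B ⟶ X) : Prop :=
  ∃ zero : f ≫ g = 0, (ShortComplex.mk f g zero).ShortExact

theorem SESMaps.isSES {A B X : C} {f : A ⟶ B} {g : B ⟶ X} (h : SESMaps f g) : IsSES A B X :=
  ⟨f, g, h.1, h.2⟩

theorem IsSES.maps {A B X : C} (h : IsSES A B X) :
    ∃ (f : A ⟶ B) (g : B ⟶ X), SESMaps f g :=
  let ⟨f, g, z, h⟩ := h
  ⟨f, g, z, h⟩

theorem SESMaps.mk' {A B X : C} {f : A ⟶ B} {g : B ⟶ X} [Mono f] [Epi g] (z : f ≫ g = 0)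
    (hl : ∀ ⦃T : C⦄ (k : T ⟶ B), k ≫ g = 0 → ∃ l : T ⟶ A, l ≫ f = k) : SESMaps f g := by
  refine ⟨z, ShortComplex.ShortExact.mk' ?_ ‹_› ‹_›⟩
  apply ShortComplex.exact_of_f_is_kernel
  exact Limits.KernelFork.IsLimit.ofι' f z fun {T} k hk => ⟨(hl k hk).choose, (hl k hk).choose_spec⟩

section

variable {A B X : C} {f : A ⟶ B} {g : B ⟶ X}

theorem SESMaps.mono (h : SESMaps f g) : Mono f := h.2.mono_f

theorem SESMaps.epi (h : SESMaps f g) : Epi g := h.2.epi_g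

theorem SESMaps.lift (h : SESMaps f g) {T : C} (k : T ⟶ B) (hk : k ≫ g = 0) :
    ∃ l : T ⟶ A, l ≫ f = k :=
  have := h.mono
  ⟨h.2.exact.lift k hk, h.2.exact.lift_f k hk⟩

theorem SESMaps.of_epi (g : B ⟶ X) [Epi g] : SESMaps (Limits.kernel.ι g) g :=
  SESMaps.mk' (Limits.kernel.condition g) fun _ k hk =>
    ⟨Limits.kernel.lift g k hk, Limits.kernel.lift_ι g k hk⟩

/-- The pullback of a short exact sequence along a morphism to its last term. -/
theorem SESMaps.pullback (h : SESMaps f g) {P X' : C} {p : P ⟶ X'} {q : P ⟶ B} {t : X' ⟶ X}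
    (sq : IsPullback p q t g) : ∃ f' : A ⟶ P, f' ≫ q = f ∧ SESMaps f' p := by
  have := h.epi
  have := h.mono
  have hf' : sq.lift 0 f (by simp [h.1]) ≫ q = f := sq.lift_snd _ _ _
  have : Epi p := by
    have := sq.isoPullback_hom_fst
    rw [← this]; infer_instance
  have : Mono (sq.lift 0 f (by simp [h.1])) := by
    have : Mono (sq.lift 0 f (by simp [h.1]) ≫ q) := by rw [hf']; infer_instance
    exact mono_of_mono _ q
  refine ⟨_, hf', SESMaps.mk' (sq.lift_fst _ _ _) fun T k hk => ?_⟩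
  obtain ⟨l, hl⟩ := h.lift (k ≫ q) (by rw [Category.assoc, ← sq.w, ← Category.assoc, hk]; simp)
  refine ⟨l, sq.hom_ext ?_ ?_⟩
  · simp [hk]
  · rw [Category.assoc, hf', hl]

/-- The kernel of a composite of epimorphisms is an extension of the kernels: this is the
pullback of the kernel of the second one along the first. -/
theorem SESMaps.comp {L Z : C} {a : L ⟶ B} {p : B ⟶ X} {b : A ⟶ X} {q : X ⟶ Z}
    (h₁ : SESMaps a p) (h₂ : SESMaps b q) {Q : C} {u : Q ⟶ A} {v : Q ⟶ B}
    (sq : IsPullback u v b p) : (∃ a' : L ⟶ Q, SESMaps a' u) ∧ SESMaps v (p ≫ q) := by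
  have := h₁.epi
  have := h₂.epi
  have := h₂.mono
  refine ⟨(h₁.pullback sq).imp fun _ h => h.2, ?_⟩
  have : Mono v := by
    have := sq.isoPullback_hom_snd
    rw [← this]; infer_instance
  refine SESMaps.mk' ?_ fun T k hk => ?_
  · rw [← Category.assoc, ← sq.w, Category.assoc, h₂.1, Limits.comp_zero]
  · obtain ⟨l, hl⟩ := h₂.lift (k ≫ p) (by simpa using hk)
    exact ⟨sq.lift l k hl, sq.lift_snd _ _ _⟩

end

theorem IsSES.pullback {K X Z L X' : C} (h : IsSES K X Z) (h' : IsSES L X' Z) :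
    ∃ P : C, IsSES K P X' ∧ IsSES L P X := by
  obtain ⟨f, g, h⟩ := h.maps
  obtain ⟨f', g', h'⟩ := h'.maps
  have sq := IsPullback.of_hasPullback g' g
  obtain ⟨_, _, h₁⟩ := h.pullback sq
  obtain ⟨_, _, h₂⟩ := h'.pullback sq.flip
  exact ⟨_, h₁.isSES, h₂.isSES⟩

theorem IsSES.comp {L X P K Z : C} (h : IsSES L X P) (h' : IsSES K P Z) :
    ∃ Q : C, IsSES Q X Z ∧ IsSES L Q K := by
  obtain ⟨_, p, h⟩ := h.maps
  obtain ⟨b, _, h'⟩ := h'.maps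
  obtain ⟨⟨_, h₁⟩, h₂⟩ := h.comp h' (IsPullback.of_hasPullback b p)
  exact ⟨_, h₂.isSES, h₁.isSES⟩

theorem IsSES.op {A B X : C} (h : IsSES A B X) :
    IsSES (Opposite.op X) (Opposite.op B) (Opposite.op A) :=
  let ⟨_, _, _, h⟩ := h
  ⟨_, _, _, h.op⟩

theorem IsSES.unop {A B X : Cᵒᵖ} (h : IsSES A B X) : IsSES X.unop B.unop A.unop :=
  let ⟨_, _, _, h⟩ := h
  ⟨_, _, _, h.unop⟩

theorem IsSES.pushout {K A M B N : C} (h : IsSES K A M) (h' : IsSES K B N) :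
    ∃ P : C, IsSES A P N ∧ IsSES B P M := by
  obtain ⟨P, h₁, h₂⟩ := h.op.pullback h'.op
  exact ⟨P.unop, h₂.unop, h₁.unop⟩

/-- The cokernel of a composite of monomorphisms is an extension of the cokernels. -/
theorem IsSES.cocomp {K A M B N : C} (h : IsSES K A M) (h' : IsSES A B N) :
    ∃ Q : C, IsSES K B Q ∧ IsSES M Q N := by
  obtain ⟨P, h₁, h₂⟩ := h'.op.comp h.op
  exact ⟨P.unop, h₁.unop, h₂.unop⟩

theorem IsSES.zero_left {M W : C} (e : W ≅ M) {Z : C} (hZ : Limits.IsZero Z) : IsSES Z W M := by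
  have : Mono (0 : Z ⟶ W) := ⟨fun _ _ _ => hZ.eq_of_tgt _ _⟩
  refine (SESMaps.mk' (f := (0 : Z ⟶ W)) (g := e.hom) (by simp) fun T k hk => ⟨0, ?_⟩).isSES
  rw [← cancel_mono e.hom, hk]; simp

/-- An extension with vanishing `Ext¹` class splits, so it can be read in the other direction. -/
theorem IsSES.swap [HasExt.{w} C] {L P X : C} (h : IsSES L P X)
    (hE : Subsingleton (Abelian.Ext X L 1)) : IsSES X P L := by
  obtain ⟨f, g, z, h⟩ := h
  obtain ⟨s, hs⟩ := Abelian.Ext.covariant_sequence_exact₃ X h (Abelian.Ext.mk₀ (𝟙 X)) (zero_add 1)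
    (Subsingleton.elim _ _)
  obtain ⟨s, rfl⟩ := (Abelian.Ext.mk₀_bijective _ _).2 s
  rw [Abelian.Ext.mk₀_comp_mk₀] at hs
  have hs' : s ≫ g = 𝟙 X := (Abelian.Ext.mk₀_bijective _ _).1 hs
  let σ := ShortComplex.Splitting.ofExactOfSection _ h.exact s hs' h.mono_f
  refine ⟨σ.s, σ.r, σ.s_r, ?_⟩
  have : Mono σ.s := ⟨fun a b hab => by simpa [σ.s_g] using hab =≫ g⟩
  have : Epi σ.r := ⟨fun a b hab => by simpa [σ.f_r_assoc] using f ≫= hab⟩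
  refine (SESMaps.mk' σ.s_r fun T k hk => ⟨k ≫ g, ?_⟩).2
  have := k ≫= σ.id
  simpa [reassoc_of% hk] using this

/-! ### Elementary closure properties of resolutions -/

theorem ClosedUnderSummands.iso {P : C → Prop} (h : ClosedUnderSummands P) {M W : C}
    (hW : P W) (e : M ≅ W) : P M :=
  h hW ⟨e.hom, e.inv, e.hom_inv_id⟩

theorem ClosedUnderSummands.zero {P : C → Prop} (h : ClosedUnderSummands P) {W Z : C}
    (hW : P W) (hZ : Limits.IsZero Z) : P Z :=
  h hW ⟨0, 0, hZ.eq_of_src _ _⟩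

theorem HasResLength.exists_mem {P : C → Prop} {n : ℕ} {M : C} (h : HasResLength P n M) :
    ∃ W, P W := by
  cases h with
  | of_iso hW e => exact ⟨_, hW⟩
  | step hW _ _ => exact ⟨_, hW⟩

theorem HasResLength.succ {P : C → Prop} (hP : ClosedUnderSummands P) {n : ℕ} {M : C}
    (h : HasResLength P n M) : HasResLength P (n + 1) M := by
  induction h with
  | of_iso hW e =>
    have hZ := Limits.isZero_zero C
    exact .step hW (IsSES.zero_left e.symm hZ) (.of_iso (hP.zero hW hZ) (Iso.refl _))
  | step hW h _ ih => exact .step hW h ih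

theorem HasResLength.mono {P Q : C → Prop} (hPQ : ∀ ⦃M⦄, P M → Q M) {n : ℕ} {M : C}
    (h : HasResLength P n M) : HasResLength Q n M := by
  induction h with
  | of_iso hW e => exact .of_iso (hPQ hW) e
  | step hW h _ ih => exact .step (hPQ hW) h ih

/-- A finite resolution by objects of a cone-closed class stays in that class. -/
theorem HasResLength.mem {P : C → Prop} (hs : ClosedUnderSummands P) (hc : ClosedUnderCones P)
    {n : ℕ} {M : C} (h : HasResLength P n M) : P M := by
  induction h with
  | of_iso hW e => exact hs.iso hW e
  | step hW h _ ih => exact hc h ih hW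

theorem HasResLength.thickClosure {P : C → Prop} {n : ℕ} {M : C} (h : HasResLength P n M) :
    ThickClosure P M := by
  induction h with
  | of_iso hW e => exact .summand (.of hW) e.hom e.inv e.hom_inv_id
  | step hW h _ ih => exact .cone h ih (.of hW)

/-- Dimension shifting along a finite `ω`-resolution. -/
theorem HasResLength.ext_subsingleton [HasExt.{w} C] {X ω : C → Prop} (hω : ClosedUnderSummands ω)
    (hE : ExtVanish.{w} X ω) {A : C} (hA : X A) {n : ℕ} {M : C} (h : HasResLength ω n M) :
    ∀ i : ℕ, 1 ≤ i → Subsingleton (Abelian.Ext A M i) := by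
  induction h with
  | of_iso hW e => exact hE hA (hω.iso hW e)
  | step hW h _ ih =>
    intro i hi
    obtain ⟨f, g, z, h⟩ := h
    refine subsingleton_of_forall_eq 0 fun x => ?_
    have := ih (i + 1) (by lia)
    have := hE hA hW i hi
    obtain ⟨y, rfl⟩ := Abelian.Ext.covariant_sequence_exact₃ A h x rfl (Subsingleton.elim _ _)
    rw [Subsingleton.elim y 0, Abelian.Ext.zero_comp]

/-! ### Approximations for a left Frobenius pair -/

section Frobenius

variable [HasExt.{w} C] {X ω : C → Prop}

/-- The two Auslander-Buchweitz approximations: an object of `X`-resolution dimension at most `n`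
embeds in an object of `ω`-resolution dimension at most `n` with cokernel in `X`, and, if `n` is
positive, is the quotient of an object of `X` by one of `ω`-resolution dimension at most `n - 1`. -/
theorem IsLeftFrobenius.approx (hF : IsLeftFrobenius.{w} X ω) (n : ℕ) :
    (∀ ⦃M : C⦄, HasResLength X n M →
      ∃ H X₁ : C, HasResLength ω n H ∧ X X₁ ∧ IsSES M H X₁) ∧
    (∀ ⦃M : C⦄, HasResLength X (n + 1) M →
      ∃ K X₀ : C, HasResLength ω n K ∧ X X₀ ∧ IsSES K X₀ M) := by
  obtain ⟨⟨hext, hsum, hcoc⟩, hωX, hωs, hE, hgen⟩ := hF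
  have step : ∀ n : ℕ, (∀ ⦃M : C⦄, HasResLength X n M →
      ∃ H X₁ : C, HasResLength ω n H ∧ X X₁ ∧ IsSES M H X₁) →
      (∀ ⦃M : C⦄, HasResLength X (n + 1) M →
      ∃ K X₀ : C, HasResLength ω n K ∧ X X₀ ∧ IsSES K X₀ M) := by
    intro n hn M hM
    cases hM with
    | step hW h hK =>
      obtain ⟨H, X₁, hH, hX₁, h'⟩ := hn hK
      obtain ⟨P, h₁, h₂⟩ := h.pushout h'
      exact ⟨H, P, hH, hext h₁ hW hX₁, h₂⟩
  have emb : ∀ ⦃M : C⦄, HasResLength X n M →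
      ∃ H X₁ : C, HasResLength ω n H ∧ X X₁ ∧ IsSES M H X₁ := by
    induction n with
    | zero =>
      intro M hM
      cases hM with
      | of_iso hW e =>
        obtain ⟨W, A', hW', hA', h⟩ := hgen (hsum.iso hW e)
        exact ⟨W, A', .of_iso hW' (Iso.refl _), hA', h⟩
    | succ n ih =>
      intro M hM
      obtain ⟨K, X₀, hK, hX₀, h⟩ := step n ih hM
      obtain ⟨W, X₁, hW, hX₁, h'⟩ := hgen hX₀
      obtain ⟨H, h₁, h₂⟩ := h.cocomp h'
      exact ⟨H, X₁, .step hW h₁ hK, hX₁, h₂⟩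
  exact ⟨emb, step n emb⟩

theorem IsLeftFrobenius.summands (hF : IsLeftFrobenius.{w} X ω) : ClosedUnderSummands X :=
  hF.1.2.1

/-- The kernel of an epimorphism onto an object of `X` has no larger `X`-resolution dimension. -/
theorem IsLeftFrobenius.resLength_cocone (hF : IsLeftFrobenius.{w} X ω) {n : ℕ} {K P X₀ : C}
    (h : IsSES K P X₀) (hP : HasResLength X n P) (hX₀ : X X₀) : HasResLength X n K := by
  cases hP with
  | of_iso hW e => exact .of_iso (hF.1.2.2 h (hF.summands.iso hW e) hX₀) (Iso.refl _)
  | step hW h' hL =>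
    obtain ⟨Q, h₁, h₂⟩ := h'.comp h
    exact .step (hF.1.2.2 h₁ hW hX₀) h₂ hL

/-- An extension of an object of `X` by one with a finite `ω`-resolution splits, and so does not
raise the `X`-resolution dimension. -/
theorem IsLeftFrobenius.resLength_ext_of_omega (hF : IsLeftFrobenius.{w} X ω) {n : ℕ} {L P X₀ : C}
    (h : IsSES L P X₀) (hL : HasResLength ω n L) (hX₀ : X X₀) : HasResLength X n P := by
  have h' := h.swap (hL.ext_subsingleton hF.2.2.1 hF.2.2.2.1 hX₀ 1 le_rfl)
  cases hL with
  | of_iso hW e =>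
    exact .of_iso (hF.1.1 h (hF.summands.iso (hF.2.1 hW) e) hX₀) (Iso.refl _)
  | step hW h₁ hK =>
    obtain ⟨E, h₂, h₃⟩ := h₁.pullback h'
    exact .step (hF.1.1 h₃ hX₀ (hF.2.1 hW)) h₂ (hK.mono hF.2.1)

/-- An extension of an object of `X` does not raise the `X`-resolution dimension. -/
theorem IsLeftFrobenius.resLength_ext (hF : IsLeftFrobenius.{w} X ω) {n : ℕ} {K Q X₀ : C}
    (h : IsSES K Q X₀) (hK : HasResLength X n K) (hX₀ : X X₀) : HasResLength X n Q := by
  obtain ⟨H, X₁, hH, hX₁, h'⟩ := (hF.approx n).1 hK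
  obtain ⟨E, h₁, h₂⟩ := h.pushout h'
  exact hF.resLength_cocone h₁ (hF.resLength_ext_of_omega h₂ hH hX₀) hX₁

/-- Objects of bounded `X`-resolution dimension are closed under direct summands. -/
theorem IsLeftFrobenius.resLength_summand (hF : IsLeftFrobenius.{w} X ω) {n : ℕ} {Z M : C}
    (hZ : HasResLength X n Z) (i : M ⟶ Z) (r : Z ⟶ M) (hir : i ≫ r = 𝟙 M) :
    HasResLength X n M := by
  induction n generalizing Z M with
  | zero =>
    cases hZ with
    | of_iso hW e => exact .of_iso (hF.summands (hF.summands.iso hW e) ⟨i, r, hir⟩) (Iso.refl _)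
  | succ n ih =>
    cases hZ with
    | @step K W _ _ hW h hK =>
      obtain ⟨f, g, h⟩ := h.maps
      have : Epi r := ⟨fun a b hab => by simpa [reassoc_of% hir] using i ≫= hab⟩
      -- `N` is the complementary summand of `Z`, with inclusion `κ` and projection `π`.
      have hr := SESMaps.of_epi r
      obtain ⟨π, hπ⟩ := hr.lift (𝟙 Z - r ≫ i) (by simp [hir])
      -- `T` is the kernel of `W ⟶ Z ⟶ M`, an extension of `N` by `K`.
      obtain ⟨T, u, v, sq⟩ : ∃ (T : C) (u : T ⟶ Limits.kernel r) (v : T ⟶ W),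
        IsPullback u v (Limits.kernel.ι r) g := ⟨_, _, _, IsPullback.of_hasPullback _ _⟩
      obtain ⟨⟨a, h₁⟩, h₂⟩ := h.comp hr sq
      have hu : u = v ≫ g ≫ π := by
        have := hr.mono
        rw [← cancel_mono (Limits.kernel.ι r)]
        simp only [Category.assoc, hπ]
        rw [← Category.assoc, ← sq.w]
        simp
      -- `T` is a retract of the pullback of `T` and `W` over `N`: the inclusion of `T` in `W`
      -- supplies the section. That pullback is an extension of `W` by `K`.
      have sq' := IsPullback.of_hasPullback (g ≫ π) u
      obtain ⟨_, _, h₃⟩ := h₁.pullback sq'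
      refine .step hW h₂.isSES (ih (hF.resLength_ext h₃.isSES hK hW)
        (sq'.lift v (𝟙 T) (by simp [hu])) _ (sq'.lift_snd _ _ _))

end Frobenius

/-! ### The class of objects with finite resolutions in a weak Auslander-Buchweitz context -/

section Context

variable [HasExt.{w} C] {X ω Y : C → Prop}

/-- If `Y` is right thick, lies in `X^∧`, and meets `X` exactly in `ω`, then `Y = ω^∧`. -/
theorem IsLeftFrobenius.mem_iff_resClass (hF : IsLeftFrobenius.{w} X ω) (hY : RightThick Y)
    (hω : ∀ M, ω M ↔ X M ∧ Y M) (hYX : ∀ M, Y M → ResClass X M) (M : C) :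
    ResClass ω M ↔ Y M := by
  have hmem : ∀ {n : ℕ} {M : C}, HasResLength ω n M → Y M := fun h =>
    (h.mono fun M hM => ((hω M).1 hM).2).mem hY.2.1 hY.2.2
  refine ⟨fun ⟨n, h⟩ => hmem h, fun hM => ?_⟩
  obtain ⟨n, h⟩ := hYX M hM
  obtain ⟨K, X₀, hK, hX₀, h'⟩ := (hF.approx n).2 (h.succ hF.summands)
  exact ⟨n + 1, .step ((hω X₀).2 ⟨hX₀, hY.1 h' (hmem hK) hM⟩) h' hK⟩

/-- The thickness of `X^∧`. The inputs are the two approximations and the fact that `Y = ω^∧` is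
closed under extensions and contained in `X^∧`. -/
theorem IsLeftFrobenius.resClass_of_thickClosure (hF : IsLeftFrobenius.{w} X ω) (hY : RightThick Y)
    (hω : ∀ M, ω M ↔ X M ∧ Y M) (hYX : ∀ M, Y M → ResClass X M) {M : C}
    (hM : ThickClosure X M) : ResClass X M := by
  have hYω := hF.mem_iff_resClass hY hω hYX
  have cover : ∀ {M : C}, ResClass X M → ∃ K X₀ : C, Y K ∧ X X₀ ∧ IsSES K X₀ M := by
    rintro M ⟨n, h⟩
    obtain ⟨K, X₀, hK, hX₀, h'⟩ := (hF.approx n).2 (h.succ hF.summands)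
    exact ⟨K, X₀, (hYω K).1 ⟨n, hK⟩, hX₀, h'⟩
  have emb : ∀ {M : C}, ResClass X M → ∃ H X₁ : C, Y H ∧ X X₁ ∧ IsSES M H X₁ := by
    rintro M ⟨n, h⟩
    obtain ⟨H, X₁, hH, hX₁, h'⟩ := (hF.approx n).1 h
    exact ⟨H, X₁, (hYω H).1 ⟨n, hH⟩, hX₁, h'⟩
  have quot : ∀ {K X₀ M : C}, IsSES K X₀ M → ResClass X K → X X₀ → ResClass X M :=
    fun h ⟨n, hK⟩ hX₀ => ⟨n + 1, .step hX₀ h hK⟩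
  -- The quotient of an object of `X^∧` by a subobject in `Y` is in `X^∧`.
  have quotY : ∀ {K E M : C}, IsSES K E M → Y K → ResClass X E → ResClass X M := by
    intro K E M h hK hE
    obtain ⟨L, X', hL, hX', h'⟩ := cover hE
    obtain ⟨Q, h₁, h₂⟩ := h'.comp h
    exact quot h₁ (hYX Q (hY.1 h₂ hL hK)) hX'
  have ext : ∀ {M₁ M M₂ : C}, IsSES M₁ M M₂ → ResClass X M₁ → ResClass X M₂ → ResClass X M := by
    rintro M₁ M M₂ h ⟨n, hM₁⟩ hM₂
    obtain ⟨K, X₀, hK, hX₀, h'⟩ := cover hM₂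
    obtain ⟨E, h₁, h₂⟩ := h.pullback h'
    exact quotY h₂ hK ⟨n, hF.resLength_ext h₁ hM₁ hX₀⟩
  induction hM with
  | of h => exact ⟨0, .of_iso h (Iso.refl _)⟩
  | ext h _ _ ihA ihX => exact ext h ihA ihX
  | cone h _ _ ihA ihB =>
    obtain ⟨H, X₁, hH, hX₁, h'⟩ := emb ihA
    obtain ⟨E, h₁, h₂⟩ := h.pushout h'
    exact quotY h₂ hH (ext h₁ ihB ⟨0, .of_iso hX₁ (Iso.refl _)⟩)
  | cocone h _ _ ihB ihX =>
    obtain ⟨K, X₀, hK, hX₀, h'⟩ := cover ihX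
    obtain ⟨E, h₁, h₂⟩ := h.pullback h'
    obtain ⟨n, hE⟩ := ext h₂ (hYX K hK) ihB
    exact ⟨n, hF.resLength_cocone h₁ hE hX₀⟩
  | summand _ i r hir ih =>
    obtain ⟨n, hn⟩ := ih
    exact ⟨n, hF.resLength_summand hn i r hir⟩

end Context

theorem stmt_8 [HasExt.{w} C] (A B S : C → Prop)
    (h : IsLeftWeakABCut A B S) :
    (∀ M : C, ResClass (fun N => (A N ∧ B N) ∧ S N) M ↔ (B M ∧ S M)) ∧
    ExtVanish (fun M => A M ∧ S M) (fun M => B M ∧ S M) ∧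
    (∀ M : C, ThickClosure (fun N => A N ∧ S N) M ↔ ResClass (fun N => A N ∧ S N) M) := by
  obtain ⟨⟨-, hF, -⟩, hY, hYX⟩ := h
  have hω : ∀ M : C, ((A M ∧ B M) ∧ S M) ↔ (A M ∧ S M) ∧ (B M ∧ S M) := fun M => by tauto
  have hYX' : ∀ M : C, B M ∧ S M → ResClass (fun N => A N ∧ S N) M := fun M hM => hYX hM.1 hM.2
  have hYω := hF.mem_iff_resClass hY hω hYX'
  refine ⟨hYω, fun M N hM hN => ?_, fun M =>
    ⟨hF.resClass_of_thickClosure hY hω hYX', fun ⟨n, hn⟩ => hn.thickClosure⟩⟩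
  obtain ⟨n, hn⟩ := (hYω N).2 hN
  exact hn.ext_subsingleton hF.2.2.1 hF.2.2.2.1 hM
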